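/- Let n = 2t be an even integer with n ≥ 6, let s be an integer with 2 ≤ s ≤ 3^t − 1 (i.e. s ∉ {1, 3^t, 3^t + 1}), and let W_1, …, W_s be pairwise disjoint t-dimensional F_3-linear subspaces of F_3^n, with f the associated characteristic function. Then for all pairwise distinct w_1, w_2, w_3 ∈ F_3^n with w_1 + w_2 + w_3 = 0, one has Re(f̂(w_1)) + Re(f̂(w_2)) − 2·Re(f̂(w_3)) ≠ 3^n. -/

import Mathlib

open Matrix Finset

lemma aux_sum_sub {n : ℕ} (V : Submodule (ZMod 3) (Fin n → ZMod 3)) (t : ℕ)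
    (hV : Module.finrank (ZMod 3) V = t) (w : Fin n → ZMod 3) :
    (by classical exact ∑ x : Fin n → ZMod 3,
      (if x ∈ V then (1 : ℂ) else 0) * ZMod.stdAddChar (-(w ⬝ᵥ x)) =
    if (∀ x ∈ V, w ⬝ᵥ x = 0) then (3 : ℂ) ^ t else 0) := by
  classical
  have hcard : Fintype.card V = 3 ^ t := by
    rw [Module.card_eq_pow_finrank (K := ZMod 3), hV, ZMod.card]
  let φ : V →+ ZMod 3 :=
    { toFun := fun x => -(w ⬝ᵥ (x : Fin n → ZMod 3))
      map_zero' := by simp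
      map_add' := by intro a b; simp [dotProduct_add]; ring }
  let χ : AddChar V ℂ := (ZMod.stdAddChar (N := 3)).compAddMonoidHom φ
  have hχ : ∀ x : V, χ x = ZMod.stdAddChar (-(w ⬝ᵥ (x : Fin n → ZMod 3))) := fun x => rfl
  have h1 : ∑ x : Fin n → ZMod 3,
      (if x ∈ V then (1 : ℂ) else 0) * ZMod.stdAddChar (-(w ⬝ᵥ x)) = ∑ x : V, χ x := by
    simp only [ite_mul, one_mul, zero_mul]
    rw [← Finset.sum_filter]
    rw [Finset.sum_subtype (p := fun x => x ∈ V) _ (by simp)]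
    rfl
  have h2 : χ = 0 ↔ ∀ x ∈ V, w ⬝ᵥ x = 0 := by
    constructor
    · intro h x hx
      have h3 : χ ⟨x, hx⟩ = 1 := by rw [h]; rfl
      rw [hχ] at h3
      have h4 : ZMod.stdAddChar (-(w ⬝ᵥ x)) = ZMod.stdAddChar (N := 3) 0 := by
        rw [AddChar.map_zero_eq_one]; exact h3
      have := ZMod.injective_stdAddChar h4
      simpa using this
    · intro h
      ext x
      rw [hχ, h x x.2]
      simp
  rw [h1, AddChar.sum_eq_ite]
  simp only [h2, hcard]
  push_cast
  rfl

lemma aux_root (a : ZMod 3) :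
    Complex.exp (2 * Real.pi * Complex.I / 3) ^ a.val = ZMod.stdAddChar a := by
  rw [ZMod.stdAddChar_apply, ZMod.toCircle_apply, ← Complex.exp_nat_mul]
  congr 1
  push_cast
  ring

lemma aux_re : (ZMod.stdAddChar (N := 3) 1).re = -1 / 2 := by
  rw [← aux_root]
  have : (1 : ZMod 3).val = 1 := rfl
  rw [this, pow_one]
  have h : (2 * Real.pi * Complex.I / 3 : ℂ) = ((Real.pi - Real.pi / 3 : ℝ) : ℂ) * Complex.I := by
    push_cast; ring
  rw [h, Complex.exp_ofReal_mul_I_re, Real.cos_pi_sub, Real.cos_pi_div_three]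
  norm_num

lemma aux_zero {n : ℕ} (w : Fin n → ZMod 3) (h : ∀ x, w ⬝ᵥ x = 0) : w = 0 := by
  ext i
  have := h (Pi.single i 1)
  simpa using this

open Classical in
theorem aux_walsh (t n s : ℕ)
    (W : Fin s → Submodule (ZMod 3) (Fin n → ZMod 3))
    (hdim : ∀ k, Module.finrank (ZMod 3) (W k) = t)
    (hdisj : ∀ i j, i ≠ j → W i ⊓ W j = ⊥)
    (f : (Fin n → ZMod 3) → ZMod 3)
    (hf1 : ∀ (x : Fin n → ZMod 3) (k : Fin s), x ≠ 0 → x ∈ W k → f x = 1)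
    (hf0 : ∀ x : Fin n → ZMod 3, (x = 0 ∨ ∀ k, x ∉ W k) → f x = 0)
    (w : Fin n → ZMod 3) :
    (∑ x : Fin n → ZMod 3,
      Complex.exp (2 * Real.pi * Complex.I / 3) ^ ((f x - w ⬝ᵥ x).val)).re =
    (if w = 0 then (3 : ℝ) ^ n else 0) - 3 / 2 *
      (3 ^ t * ((Finset.univ.filter (fun k => ∀ x ∈ W k, w ⬝ᵥ x = 0)).card : ℝ) - s) := by
  have hpt : ∀ x, Complex.exp (2 * Real.pi * Complex.I / 3) ^ ((f x - w ⬝ᵥ x).val) =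
      (if x ∈ (⊤ : Submodule (ZMod 3) (Fin n → ZMod 3)) then (1 : ℂ) else 0)
        * ZMod.stdAddChar (-(w ⬝ᵥ x)) +
      (ZMod.stdAddChar (N := 3) 1 - 1) * ∑ k : Fin s,
        ((if x ∈ W k then (1 : ℂ) else 0) * ZMod.stdAddChar (-(w ⬝ᵥ x)) -
         (if x ∈ (⊥ : Submodule (ZMod 3) (Fin n → ZMod 3)) then (1 : ℂ) else 0)
          * ZMod.stdAddChar (-(w ⬝ᵥ x))) := by
    intro x
    rw [aux_root, sub_eq_add_neg, AddChar.map_add_eq_mul]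
    by_cases hx : x = 0
    · rw [hf0 x (Or.inl hx)]; simp [hx]
    by_cases hk : ∃ k, x ∈ W k
    · obtain ⟨k, hk⟩ := hk
      rw [hf1 x k hx hk, Finset.sum_eq_single k]
      · simp [hk, hx]; ring
      · intro j _ hj
        have : x ∉ W j := by
          intro hxj
          have h := hdisj j k hj
          have : x ∈ W j ⊓ W k := ⟨hxj, hk⟩
          rw [h] at this
          exact hx (by simpa using this)
        simp [this, hx]
      · simp
    · push Not at hk
      rw [hf0 x (Or.inr hk)]
      simp [hk, hx]
  have htop : (∀ x ∈ (⊤ : Submodule (ZMod 3) (Fin n → ZMod 3)), w ⬝ᵥ x = 0) ↔ w = 0 := by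
    constructor
    · intro h; exact aux_zero w (fun x => h x trivial)
    · rintro rfl; simp
  have hmain : (∑ x : Fin n → ZMod 3,
      Complex.exp (2 * Real.pi * Complex.I / 3) ^ ((f x - w ⬝ᵥ x).val)) =
      (((if w = 0 then (3 : ℝ) ^ n else 0 : ℝ)) : ℂ) + (ZMod.stdAddChar (N := 3) 1 - 1) *
      ((3 ^ t * ((Finset.univ.filter (fun k => ∀ x ∈ W k, w ⬝ᵥ x = 0)).card : ℝ) - s : ℝ) : ℂ) := by
    rw [Finset.sum_congr rfl (fun x _ => hpt x), Finset.sum_add_distrib, ← Finset.mul_sum,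
      Finset.sum_comm]
    have e1 := aux_sum_sub (⊤ : Submodule (ZMod 3) (Fin n → ZMod 3)) n (by simp) w
    have e2 := aux_sum_sub (⊥ : Submodule (ZMod 3) (Fin n → ZMod 3)) 0 (by simp) w
    have e3 := fun k => aux_sum_sub (W k) t (hdim k) w
    congr 1
    · refine Eq.trans (by convert e1) ?_
      simp only [htop]
      split_ifs <;> simp
    · congr 1
      have e4 : ∀ k, ∑ x : Fin n → ZMod 3, ((if x ∈ W k then (1 : ℂ) else 0) * ZMod.stdAddChar (-(w ⬝ᵥ x)) -
         (if x ∈ (⊥ : Submodule (ZMod 3) (Fin n → ZMod 3)) then (1 : ℂ) else 0)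
          * ZMod.stdAddChar (-(w ⬝ᵥ x))) = (if (∀ x ∈ W k, w ⬝ᵥ x = 0) then (3 : ℂ) ^ t else 0) - 1 := by
        intro k
        rw [Finset.sum_sub_distrib]
        congr 1
        · convert e3 k
        · refine Eq.trans (by convert e2) ?_
          simp
      rw [Finset.sum_congr rfl (fun k _ => e4 k), Finset.sum_sub_distrib, ← Finset.sum_filter]
      simp
      ring
  rw [hmain, Complex.add_re, Complex.re_mul_ofReal, Complex.sub_re, aux_re, Complex.ofReal_re,
    Complex.one_re]
  ring

open Classical in
theorem aux_N (t n s : ℕ) (ht : n = 2 * t)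
    (W : Fin s → Submodule (ZMod 3) (Fin n → ZMod 3))
    (hdim : ∀ k, Module.finrank (ZMod 3) (W k) = t)
    (hdisj : ∀ i j, i ≠ j → W i ⊓ W j = ⊥)
    (w : Fin n → ZMod 3) (hw : w ≠ 0) :
    (Finset.univ.filter (fun k => ∀ x ∈ W k, w ⬝ᵥ x = 0)).card ≤ 1 := by
  rw [Finset.card_le_one]
  intro i hi j hj
  by_contra hij
  simp only [Finset.mem_filter, Finset.mem_univ, true_and] at hi hj
  apply hw
  apply aux_zero
  intro x
  have h := Submodule.finrank_sup_add_finrank_inf_eq (W i) (W j)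
  rw [hdisj i j hij, hdim, hdim, finrank_bot] at h
  have htop : W i ⊔ W j = ⊤ := by
    apply Submodule.eq_top_of_finrank_eq
    rw [Module.finrank_fin_fun]; omega
  have hx : x ∈ W i ⊔ W j := by rw [htop]; trivial
  obtain ⟨y, hy, z, hz, rfl⟩ := Submodule.mem_sup.mp hx
  rw [dotProduct_add, hi y hy, hj z hz, add_zero]

theorem stmt12 (t n s : ℕ) (ht : n = 2 * t) (hn : 6 ≤ n) (hs : 2 ≤ s)
    (hs2 : s ≤ 3 ^ t - 1)
    (W : Fin s → Submodule (ZMod 3) (Fin n → ZMod 3))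
    (hdim : ∀ k, Module.finrank (ZMod 3) (W k) = t)
    (hdisj : ∀ i j, i ≠ j → W i ⊓ W j = ⊥)
    (f : (Fin n → ZMod 3) → ZMod 3)
    (hf1 : ∀ (x : Fin n → ZMod 3) (k : Fin s), x ≠ 0 → x ∈ W k → f x = 1)
    (hf0 : ∀ x : Fin n → ZMod 3, (x = 0 ∨ ∀ k, x ∉ W k) → f x = 0)
    (walsh : (Fin n → ZMod 3) → ℂ)
    (hwalsh : ∀ w : Fin n → ZMod 3, walsh w = ∑ x : Fin n → ZMod 3,
      Complex.exp (2 * Real.pi * Complex.I / 3) ^ ((f x - w ⬝ᵥ x).val))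
    :
    ∀ w1 w2 w3 : Fin n → ZMod 3, w1 ≠ w2 → w1 ≠ w3 → w2 ≠ w3 → w1 + w2 + w3 = 0 →
      (walsh w1).re + (walsh w2).re - 2 * (walsh w3).re ≠ 3 ^ n := by
  classical
  obtain ⟨N, hN⟩ : ∃ N : (Fin n → ZMod 3) → ℕ, N = fun w =>
    (Finset.univ.filter (fun k => ∀ x ∈ W k, w ⬝ᵥ x = 0)).card := ⟨_, rfl⟩
  have hre : ∀ w, (walsh w).re = (if w = 0 then (3 : ℝ) ^ n else 0) - 3 / 2 *
      (3 ^ t * (N w : ℝ) - s) := by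
    intro w
    rw [hwalsh, aux_walsh t n s W hdim hdisj f hf1 hf0 w, hN]
  have hle : ∀ w, w ≠ 0 → (N w : ℝ) ≤ 1 := by
    intro w hw
    have := aux_N t n s ht W hdim hdisj w hw
    rw [hN]
    exact_mod_cast this
  have hneg : ∀ w, N (-w) = N w := by
    intro w; simp [hN]
  have h0 : N 0 = s := by simp [hN]
  have hnn : ∀ w, (0 : ℝ) ≤ N w := fun w => Nat.cast_nonneg _
  have hsR : (2 : ℝ) ≤ s := by exact_mod_cast hs
  have hsR2 : (s : ℝ) + 1 ≤ 3 ^ t := by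
    have : 0 < 3 ^ t := by positivity
    have : s + 1 ≤ 3 ^ t := by omega
    exact_mod_cast this
  have hT : (27 : ℝ) ≤ 3 ^ t := by
    have : (3 : ℝ) ^ 3 ≤ 3 ^ t := pow_le_pow_right₀ (by norm_num) (by omega)
    linarith
  have hP : (3 : ℝ) ^ n = 3 ^ t * 3 ^ t := by rw [ht, two_mul, pow_add]
  intro w1 w2 w3 h12 h13 h23 hsum h
  rw [hre, hre, hre, hP] at h
  generalize hq : (3 : ℝ) ^ t = q at *
  have hq0 : q ≠ 0 := by linarith
  by_cases z1 : w1 = 0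
  · subst z1
    have e : w3 = -w2 := by rw [zero_add] at hsum; exact (neg_eq_of_add_eq_zero_right hsum).symm
    have z2 : w2 ≠ 0 := Ne.symm h12
    have z3 : w3 ≠ 0 := Ne.symm h13
    have e' : N w3 = N w2 := by rw [e, hneg]
    rw [if_pos rfl, if_neg z2, if_neg z3, h0, e'] at h
    have : q * ((s : ℝ) - N w2) = 0 := by linarith
    have := (mul_eq_zero.mp this).resolve_left hq0
    linarith [hle w2 z2]
  by_cases z2 : w2 = 0
  · subst z2
    have e : w3 = -w1 := by rw [add_zero] at hsum; exact (neg_eq_of_add_eq_zero_right hsum).symm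
    have z3 : w3 ≠ 0 := Ne.symm h23
    have e' : N w3 = N w1 := by rw [e, hneg]
    rw [if_pos rfl, if_neg z1, if_neg z3, h0, e'] at h
    have : q * ((s : ℝ) - N w1) = 0 := by linarith
    have := (mul_eq_zero.mp this).resolve_left hq0
    linarith [hle w1 z1]
  by_cases z3 : w3 = 0
  · subst z3
    have e : w2 = -w1 := by rw [add_zero] at hsum; exact (neg_eq_of_add_eq_zero_right hsum).symm
    have e' : N w2 = N w1 := by rw [e, hneg]
    rw [if_pos rfl, if_neg z1, if_neg z2, h0, e'] at h
    have : q * ((s : ℝ) - N w1 - q) = 0 := by linarith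
    have := (mul_eq_zero.mp this).resolve_left hq0
    linarith [hnn w1]
  · rw [if_neg z1, if_neg z2, if_neg z3] at h
    have : q * (3 / 2 * (2 * (N w3 : ℝ) - N w1 - N w2) - q) = 0 := by linarith
    have := (mul_eq_zero.mp this).resolve_left hq0
    linarith [hnn w1, hnn w2, hle w3 z3]
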